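/- arXiv:2006.12082 — 2 statements merged into one kernel-verified Lean document; each statement's English description precedes it below -/
import Mathlib

section
/- If for ν-almost every x ∈ Σ the lower local dimension of ν at x is strictly greater than h_X, then ν is Q-regular. In particular this holds if the lower Hausdorff dimension dim̲_H(ν) > h_X. -/
open MeasureTheory ProbabilityTheory Filter Set
open scoped ENNReal

noncomputable section

/-- The one-sided symbolic space over the alphabet `{0, …, b-1}`. -/
abbrev SymbSpace (b : ℕ) : Type := ℕ → Fin b

/-- The cylinder `[w]` of sequences starting with the finite word `w`. -/
def cylinder {b : ℕ} (w : List (Fin b)) : Set (SymbSpace b) :=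
  {x | ∀ i : Fin w.length, x i = w.get i}

/-- The prefix `x|_n` of `x` of length `n`, as a finite word. -/
def wordPrefix {b : ℕ} (x : SymbSpace b) (n : ℕ) : List (Fin b) :=
  List.ofFn (fun i : Fin n => x i)

/-- `Y_w = X_{w_1} X_{w_1w_2} ⋯ X_{w_1⋯w_n}`. -/
def cascadeY {b : ℕ} {Ω : Type*} (X : List (Fin b) → Ω → ℝ) (w : List (Fin b)) (ω : Ω) : ℝ :=
  ∏ k ∈ Finset.range w.length, X (w.take (k + 1)) ω

/-- The total mass `Z_n = ∑_{|u| = n} Y_u ν([u])`. -/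
def cascadeZ {b : ℕ} {Ω : Type*} (X : List (Fin b) → Ω → ℝ) (ν : Measure (SymbSpace b))
    (n : ℕ) (ω : Ω) : ℝ :=
  ∑ u : Fin n → Fin b, cascadeY X (List.ofFn u) ω * (ν (cylinder (List.ofFn u))).toReal

/-- `Z = limsup_n Z_n`. -/
def cascadeZlim {b : ℕ} {Ω : Type*} (X : List (Fin b) → Ω → ℝ) (ν : Measure (SymbSpace b))
    (ω : Ω) : ℝ :=
  Filter.limsup (fun n => cascadeZ X ν n ω) atTop

/-- Assumption (M1): the weights `X_u`, `u` a nonempty finite word, are i.i.d. with common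
law that of the nonnegative random variable `X₀` of expectation 1. -/
structure CascadeM1 {b : ℕ} {Ω : Type*} [MeasurableSpace Ω] (P : Measure Ω)
    (X : List (Fin b) → Ω → ℝ) (X₀ : Ω → ℝ) : Prop where
  meas : ∀ w, Measurable (X w)
  nonneg : ∀ w ω, 0 ≤ X w ω
  meas₀ : Measurable X₀
  nonneg₀ : ∀ ω, 0 ≤ X₀ ω
  mean₀ : ∫ ω, X₀ ω ∂P = 1
  indep : iIndepFun
    (fun w : {w : List (Fin b) // w ≠ []} => X w.1) P
  ident : ∀ w : List (Fin b), w ≠ [] → IdentDistrib (X w) X₀ P P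

/-- `h_X = E(X log X) ∈ [0, ∞]` (well defined since `x log x ≥ -e⁻¹` and, by convexity,
`E(X log X) ≥ E(X) log E(X) = 0`), encoded as an extended nonnegative real. -/
def entropyX {Ω : Type*} [MeasurableSpace Ω] (P : Measure Ω) (X₀ : Ω → ℝ) : ℝ≥0∞ :=
  (∫⁻ ω, ENNReal.ofReal (X₀ ω * Real.log (X₀ ω)) ∂P) -
    (∫⁻ ω, ENNReal.ofReal (-(X₀ ω * Real.log (X₀ ω))) ∂P)

/-- The lower local dimension `liminf_n (-log ν([x|_n]) / n)` of `ν` at `x`, valued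
in `[0, ∞]`. -/
def lowerLocalDim {b : ℕ} (ν : Measure (SymbSpace b)) (x : SymbSpace b) : ℝ≥0∞ :=
  Filter.liminf
    (fun n : ℕ => ENNReal.ofReal (-Real.log ((ν (cylinder (wordPrefix x n))).toReal) / n))
    atTop

/-- The upper local dimension `limsup_n (-log ν([x|_n]) / n)` of `ν` at `x`. -/
def upperLocalDim {b : ℕ} (ν : Measure (SymbSpace b)) (x : SymbSpace b) : ℝ≥0∞ :=
  Filter.limsup
    (fun n : ℕ => ENNReal.ofReal (-Real.log ((ν (cylinder (wordPrefix x n))).toReal) / n))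
    atTop

/-- The lower Hausdorff dimension of `ν`: the `ν`-essential infimum of the lower local
dimension. -/
def lowerHausdorffDim {b : ℕ} (ν : Measure (SymbSpace b)) : ℝ≥0∞ :=
  essInf (lowerLocalDim ν) ν

/-- The upper Hausdorff dimension of `ν`: the `ν`-essential supremum of the lower local
dimension. -/
def upperHausdorffDim {b : ℕ} (ν : Measure (SymbSpace b)) : ℝ≥0∞ :=
  essSup (lowerLocalDim ν) ν

/-- The upper packing dimension of `ν`: the `ν`-essential supremum of the upper local
dimension. -/
def upperPackingDim {b : ℕ} (ν : Measure (SymbSpace b)) : ℝ≥0∞ :=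
  essSup (upperLocalDim ν) ν

/-!
The proof is a truncated second moment bound. Under the measure with density `Q_n(·, x)` with
respect to `P`, the first `n` weights along the path `x` are independent with the size-biased law,
whose logarithm has mean at most `h_X`. For `a > h_X` the strong law of large numbers therefore
bounds the cascade along `x` by `M e^{ka}` at every level `k ≤ n`, off an event whose probability
under that measure is small uniformly in `x` and `n`. On the other hand `ν([x|_k]) ≤ C e^{-ks}` for
all `k`, with some `s > a`, off a set of small `ν`-measure. Two paths that separate after level `k`
share exactly the weights of their first `k` letters, so the part of `Z_n` on which both bounds
hold has second moment at most `∑ k, M e^{ka} C e^{-ks} < ∞`. The remaining part of `Z_n` is small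
in `L¹` uniformly in `n`, and uniform integrability follows.
-/

open scoped NNReal

section MeasureTheoreticLemmas

variable {α : Type*} [MeasurableSpace α] {μ : Measure α}

theorem ennreal_add_le_of_le_add {a r C : ℝ≥0∞} (hC₀ : C ≠ 0) (hC : C ≠ ∞) (h : C ≤ a + r) :
    a + r ≤ 2 * (a ^ 2 / C) + 2 * r := by
  rcases le_total a r with har | hra
  · calc a + r ≤ 2 * r := by rw [two_mul]; gcongr
      _ ≤ 2 * (a ^ 2 / C) + 2 * r := le_add_self
  · have hCa : C ≤ 2 * a := h.trans (by rw [two_mul]; gcongr)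
    have ha : a ≤ 2 * (a ^ 2 / C) := calc
      a = a * C / C := (ENNReal.mul_div_cancel_right hC₀ hC).symm
      _ ≤ a * (2 * a) / C := by gcongr
      _ = 2 * (a ^ 2 / C) := by rw [← mul_div_assoc]; ring_nf
    rw [two_mul r]
    exact add_le_add ha le_self_add

theorem uniformIntegrable_one_of_enorm_le_add [IsFiniteMeasure μ] {ι E : Type*}
    [NormedAddCommGroup E] {f : ι → α → E} (hf : ∀ i, AEStronglyMeasurable (f i) μ)
    (h : ∀ ε : ℝ≥0∞, ε ≠ 0 → ∃ D : ℝ≥0∞, D ≠ ∞ ∧ ∀ i, ∃ A R : α → ℝ≥0∞, Measurable R ∧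
      (∀ x, ‖f i x‖ₑ ≤ A x + R x) ∧ ∫⁻ x, A x ^ 2 ∂μ ≤ D ∧ ∫⁻ x, R x ∂μ ≤ ε) :
    UniformIntegrable f 1 μ := by
  refine uniformIntegrable_of le_rfl ENNReal.one_ne_top hf fun ε hε => ?_
  set η : ℝ≥0∞ := ENNReal.ofReal (ε / 4) with hη
  have hη₀ : η ≠ 0 := (ENNReal.ofReal_pos.2 (by positivity)).ne'
  obtain ⟨D, hD, hdecomp⟩ := h η hη₀
  obtain ⟨t, ht, htD⟩ := ENNReal.exists_nnreal_pos_mul_lt hD hη₀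
  obtain ⟨C, hC⟩ : ∃ C : ℝ≥0, (C : ℝ≥0∞) = (t : ℝ≥0∞)⁻¹ := ⟨t⁻¹, ENNReal.coe_inv ht.ne'⟩
  have hC₀ : (C : ℝ≥0∞) ≠ 0 := by simp [hC]
  have hDC : D / C ≤ η := by rw [hC, div_eq_mul_inv, inv_inv, mul_comm]; exact htD.le
  refine ⟨C, fun i => ?_⟩
  obtain ⟨A, R, hR, hle, hA2, hR1⟩ := hdecomp i
  have hpointwise (x : α) :
      ‖{x | C ≤ ‖f i x‖₊}.indicator (f i) x‖ₑ ≤ 2 * (A x ^ 2 / C) + 2 * R x := by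
    by_cases hx : C ≤ ‖f i x‖₊
    · rw [indicator_of_mem (by exact hx)]
      have hCx : (C : ℝ≥0∞) ≤ A x + R x := (ENNReal.coe_le_coe.2 hx).trans (hle x)
      exact (hle x).trans (ennreal_add_le_of_le_add hC₀ ENNReal.coe_ne_top hCx)
    · rw [indicator_of_notMem (by exact hx), enorm_zero]
      exact zero_le
  rw [eLpNorm_one_eq_lintegral_enorm]
  calc ∫⁻ x, ‖{x | C ≤ ‖f i x‖₊}.indicator (f i) x‖ₑ ∂μ
      ≤ ∫⁻ x, 2 * (A x ^ 2 / C) + 2 * R x ∂μ := lintegral_mono hpointwise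
    _ = 2 * ((∫⁻ x, A x ^ 2 ∂μ) / C) + 2 * ∫⁻ x, R x ∂μ := by
      rw [lintegral_add_right _ (hR.const_mul 2), lintegral_const_mul' _ _ ENNReal.ofNat_ne_top,
        lintegral_const_mul _ hR]
      simp_rw [div_eq_mul_inv]
      rw [lintegral_mul_const' _ _ (ENNReal.inv_ne_top.2 hC₀)]
    _ ≤ 2 * η + 2 * η := by
      gcongr
      exact (ENNReal.div_le_div_right hA2 _).trans hDC
    _ = ENNReal.ofReal ε := by
      rw [← two_mul, ← mul_assoc, hη, ← ENNReal.ofReal_ofNat 2,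
        ← ENNReal.ofReal_mul (by positivity), ← ENNReal.ofReal_mul (by positivity)]
      ring_nf

theorem exists_measure_compl_le_of_ae_exists_mem [IsFiniteMeasure μ] {s : ℕ → Set α}
    (hs : Monotone s) (hmeas : ∀ n, MeasurableSet (s n)) (hae : ∀ᵐ x ∂μ, ∃ n, x ∈ s n)
    {ε : ℝ≥0∞} (hε : ε ≠ 0) : ∃ n, μ (s n)ᶜ ≤ ε := by
  have hlim := tendsto_measure_iInter_atTop (μ := μ) (fun n => (hmeas n).compl.nullMeasurableSet)
    (fun m n hmn => compl_subset_compl.2 (hs hmn)) ⟨0, measure_ne_top _ _⟩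
  have hnull : μ (⋂ n, (s n)ᶜ) = 0 := by
    rw [← compl_iUnion]
    exact measure_eq_zero_iff_ae_notMem.2 (hae.mono fun x hx => by simpa using hx)
  rw [hnull] at hlim
  exact (hlim.eventually (ge_mem_nhds (pos_iff_ne_zero.2 hε))).exists

theorem integrable_of_lintegral_ofReal_ne_top {f : α → ℝ} (hf : Measurable f)
    (hpos : ∫⁻ x, ENNReal.ofReal (f x) ∂μ ≠ ∞) (hneg : ∫⁻ x, ENNReal.ofReal (-f x) ∂μ ≠ ∞) :
    Integrable f μ := by
  have henorm (x : α) : ‖f x‖ₑ ≤ ENNReal.ofReal (f x) + ENNReal.ofReal (-f x) := by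
    rcases le_total 0 (f x) with h | h
    · exact (Real.enorm_eq_ofReal h).trans_le le_self_add
    · rw [← enorm_neg, Real.enorm_eq_ofReal (neg_nonneg.2 h)]
      exact le_add_self
  refine ⟨hf.aestronglyMeasurable, (lintegral_mono henorm).trans_lt ?_⟩
  rw [lintegral_add_left hf.ennreal_ofReal]
  exact ENNReal.add_lt_top.2 ⟨hpos.lt_top, hneg.lt_top⟩

theorem lintegral_sq_lintegral [SFinite μ] {β : Type*} [MeasurableSpace β] {κ : Measure β}
    [SFinite κ] {f : α × β → ℝ≥0∞} (hf : Measurable f) :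
    ∫⁻ y, (∫⁻ x, f (x, y) ∂μ) ^ 2 ∂κ = ∫⁻ x, ∫⁻ x', ∫⁻ y, f (x, y) * f (x', y) ∂κ ∂μ ∂μ := by
  have hfst (y : β) : Measurable fun x => f (x, y) := hf.comp measurable_prodMk_right
  calc ∫⁻ y, (∫⁻ x, f (x, y) ∂μ) ^ 2 ∂κ
      = ∫⁻ y, ∫⁻ x, ∫⁻ x', f (x, y) * f (x', y) ∂μ ∂μ ∂κ := by
        refine lintegral_congr fun y => ?_
        rw [sq, lintegral_lintegral_mul (hfst y).aemeasurable (hfst y).aemeasurable]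
    _ = ∫⁻ x, ∫⁻ y, ∫⁻ x', f (x, y) * f (x', y) ∂μ ∂κ ∂μ :=
        lintegral_lintegral_swap (by fun_prop)
    _ = ∫⁻ x, ∫⁻ x', ∫⁻ y, f (x, y) * f (x', y) ∂κ ∂μ ∂μ :=
        lintegral_congr fun x => lintegral_lintegral_swap (by fun_prop)

end MeasureTheoreticLemmas

section ProductMeasures

theorem pi_withDensity {ι : Type*} [Fintype ι] {α : ι → Type*} [∀ i, MeasurableSpace (α i)]
    (μ : ∀ i, Measure (α i)) [∀ i, IsProbabilityMeasure (μ i)] {f : ∀ i, α i → ℝ≥0∞}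
    (hf : ∀ i, Measurable (f i)) [∀ i, SigmaFinite ((μ i).withDensity (f i))] :
    Measure.pi (fun i => (μ i).withDensity (f i)) =
      (Measure.pi μ).withDensity (fun z => ∏ i, f i (z i)) := by
  refine Measure.pi_eq fun s hs => ?_
  have hfs (i : ι) : Measurable ((s i).indicator (f i)) := (hf i).indicator (hs i)
  have hindicator (z : ∀ i, α i) : (univ.pi s).indicator (fun z => ∏ i, f i (z i)) z
      = ∏ i, (s i).indicator (f i) (z i) := by
    classical
    simp only [indicator_apply, mem_univ_pi, Finset.prod_ite_zero, Finset.mem_univ, true_implies]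
  calc (Measure.pi μ).withDensity (fun z => ∏ i, f i (z i)) (univ.pi s)
      = ∫⁻ z, ∏ i, (s i).indicator (f i) (z i) ∂Measure.pi μ := by
        rw [withDensity_apply _ (MeasurableSet.univ_pi hs),
          ← lintegral_indicator (MeasurableSet.univ_pi hs)]
        exact lintegral_congr hindicator
    _ = ∏ i, ∫⁻ z, (s i).indicator (f i) (z i) ∂Measure.pi μ :=
        lintegral_prod_eq_prod_lintegral_of_indepFun Finset.univ _
          (iIndepFun_pi fun i => (hfs i).aemeasurable)
          (fun i => (hfs i).comp (measurable_pi_apply i))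
    _ = ∏ i, (μ i).withDensity (f i) (s i) := by
        refine Finset.prod_congr rfl fun i _ => ?_
        rw [withDensity_apply _ (hs i), ← lintegral_indicator (hs i),
          ← (measurePreserving_eval μ i).lintegral_comp (hfs i)]

theorem lintegral_prod_mul_infinitePi {ι : Type*} {α : ι → Type*} [∀ i, MeasurableSpace (α i)]
    (μ : ∀ i, Measure (α i)) [∀ i, IsProbabilityMeasure (μ i)] {f : ∀ i, α i → ℝ≥0∞}
    (hf : ∀ i, Measurable (f i)) [∀ i, IsProbabilityMeasure ((μ i).withDensity (f i))]
    {S : Finset ι} {g : (∀ i, α i) → ℝ≥0∞} (hg : Measurable g) (hgS : DependsOn g S) :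
    ∫⁻ z, (∏ i ∈ S, f i (z i)) * g z ∂Measure.infinitePi μ =
      ∫⁻ z, g z ∂Measure.infinitePi (fun i => (μ i).withDensity (f i)) := by
  classical
  obtain ⟨z₀⟩ : Nonempty (∀ i, α i) := ⟨fun i => (μ i).nonempty_of_neZero.some⟩
  set G : (∀ i : S, α i) → ℝ≥0∞ := fun y => g (Function.updateFinset z₀ S y)
  have hGm : Measurable G := hg.comp measurable_updateFinset
  have hgG (z : ∀ i, α i) : g z = G (S.restrict z) :=
    hgS fun i hi => by simp_all [Function.updateFinset]
  have hprod (z : ∀ i, α i) : ∏ i ∈ S, f i (z i) = ∏ i : S, f i (S.restrict z i) :=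
    (Finset.prod_coe_sort S fun i => f i (z i)).symm
  have hfm : Measurable fun y : ∀ i : S, α i => ∏ i : S, f i (y i) := by fun_prop
  simp_rw [hgG, hprod]
  rw [lintegral_restrict_infinitePi μ (f := fun y => (∏ i : S, f i (y i)) * G y) (hfm.mul hGm),
    lintegral_restrict_infinitePi _ hGm,
    pi_withDensity (fun i : S => μ i) (f := fun i : S => f i) (fun i => hf i),
    lintegral_withDensity_eq_lintegral_mul _ hfm hGm]
  rfl

end ProductMeasures

section ExponentialBounds

theorem exists_forall_le_mul_exp {p : ℕ → ℝ} {a : ℝ}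
    (h : ∀ᶠ k : ℕ in atTop, p k ≤ Real.exp (k * a)) :
    ∃ M : ℕ, ∀ k : ℕ, p k ≤ M * Real.exp (k * a) := by
  have hratio : ∀ᶠ k : ℕ in atTop, p k / Real.exp (k * a) ≤ 1 :=
    h.mono fun k hk => (div_le_one (Real.exp_pos _)).2 hk
  obtain ⟨C, hC⟩ := IsBoundedUnder.bddAbove_range (f := fun k : ℕ => p k / Real.exp (k * a))
    (isBoundedUnder_of_eventually_le hratio)
  obtain ⟨M, hM⟩ := exists_nat_ge C
  exact ⟨M, fun k => (div_le_iff₀ (Real.exp_pos _)).1 ((hC (mem_range_self k)).trans hM)⟩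

theorem eventually_prod_le_exp {z : ℕ → ℝ} {m a : ℝ} (hma : m < a)
    (h : Tendsto (fun k : ℕ => (∑ i ∈ Finset.range k, Real.log (z i)) / k) atTop (nhds m)) :
    ∀ᶠ k : ℕ in atTop, ∏ i ∈ Finset.range k, z i ≤ Real.exp (k * a) := by
  filter_upwards [h.eventually_lt_const hma, eventually_gt_atTop 0] with k hk hk₀
  rcases le_or_gt (∏ i ∈ Finset.range k, z i) 0 with hprod | hprod
  · exact hprod.trans (Real.exp_pos _).le
  · rw [← Real.log_le_iff_le_exp hprod, Real.log_prod (Finset.prod_ne_zero_iff.1 hprod.ne')]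
    rw [div_lt_iff₀ (by exact_mod_cast hk₀)] at hk
    linarith

theorem ae_tendsto_sum_div_infinitePi {α : Type*} [MeasurableSpace α] {ρ : Measure α}
    [IsProbabilityMeasure ρ] {f : α → ℝ} (hf : Measurable f) (hint : Integrable f ρ) :
    ∀ᵐ z ∂Measure.infinitePi (fun _ : ℕ => ρ),
      Tendsto (fun k : ℕ => (∑ i ∈ Finset.range k, f (z i)) / k) atTop
        (nhds (∫ x, f x ∂ρ)) := by
  set μ := Measure.infinitePi (fun _ : ℕ => ρ)
  have heval (i : ℕ) : MeasurePreserving (fun z : ℕ → α => z i) μ ρ :=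
    measurePreserving_eval_infinitePi (fun _ => ρ) i
  have hindep : iIndepFun (fun (i : ℕ) (z : ℕ → α) => f (z i)) μ :=
    iIndepFun_infinitePi (X := fun _ => f) (fun _ => hf)
  have hident (i : ℕ) : IdentDistrib (fun z : ℕ → α => f (z i)) (fun z => f (z 0)) μ μ :=
    IdentDistrib.comp (f := fun z : ℕ → α => z i) (g := fun z : ℕ → α => z 0)
      ⟨(heval i).aemeasurable, (heval 0).aemeasurable,
        (heval i).map_eq.trans (heval 0).map_eq.symm⟩ hf
  have hmean : ∫ z, f (z 0) ∂μ = ∫ x, f x ∂ρ := by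
    rw [← (heval 0).map_eq, integral_map (heval 0).aemeasurable hf.aestronglyMeasurable]
  rw [← hmean]
  exact strong_law_ae_real _ ((heval 0).integrable_comp_of_integrable hint)
    (fun i j hij => hindep.indepFun hij) hident

theorem exists_infinitePi_compl_prod_le_exp_le {ρ : Measure ℝ} [IsProbabilityMeasure ρ]
    (hint : Integrable Real.log ρ) {a : ℝ} (ha : ∫ x, Real.log x ∂ρ < a) {ε : ℝ≥0∞}
    (hε : ε ≠ 0) :
    ∃ M : ℕ, Measure.infinitePi (fun _ : ℕ => ρ)
      {z | ∀ k : ℕ, ∏ i ∈ Finset.range k, z i ≤ M * Real.exp (k * a)}ᶜ ≤ ε := by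
  refine exists_measure_compl_le_of_ae_exists_mem
    (s := fun M : ℕ => {z : ℕ → ℝ | ∀ k : ℕ, ∏ i ∈ Finset.range k, z i ≤ M * Real.exp (k * a)})
    (fun M N hMN z hz k => (hz k).trans (by gcongr)) (fun M => ?_) ?_ hε
  · simp only [ofPred_forall]
    exact .iInter fun k => measurableSet_le (by fun_prop) measurable_const
  · filter_upwards [ae_tendsto_sum_div_infinitePi Real.measurable_log hint] with z hz
    exact exists_forall_le_mul_exp (eventually_prod_le_exp ha hz)

theorem tsum_ofReal_exp_mul_ofReal_exp_ne_top {M C a s : ℝ} (hM : 0 ≤ M) (has : a < s) :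
    ∑' k : ℕ, ENNReal.ofReal (M * Real.exp (k * a)) *
      ENNReal.ofReal (C * Real.exp (k * -s)) ≠ ∞ := by
  have hterm (k : ℕ) : ENNReal.ofReal (M * Real.exp (k * a)) *
      ENNReal.ofReal (C * Real.exp (k * -s)) =
        ENNReal.ofReal (M * C * Real.exp (k * (a - s))) := by
    rw [← ENNReal.ofReal_mul (by positivity), mul_mul_mul_comm, ← Real.exp_add]
    ring_nf
  simp_rw [hterm]
  exact ((Real.summable_exp_nat_mul_iff.2 (sub_neg.2 has)).mul_left _).tsum_ofReal_ne_top

end ExponentialBounds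

section Words

variable {b : ℕ} {x y : SymbSpace b} {k n : ℕ}

theorem length_wordPrefix (x : SymbSpace b) (n : ℕ) : (wordPrefix x n).length = n :=
  List.length_ofFn

theorem take_wordPrefix (x : SymbSpace b) (h : k ≤ n) :
    (wordPrefix x n).take k = wordPrefix x k :=
  List.ext_getElem (by simp [wordPrefix, h]) (by simp [wordPrefix])

theorem mem_cylinder_ofFn {u : Fin n → Fin b} :
    x ∈ cylinder (List.ofFn u) ↔ (fun i : Fin n => x i) = u := by
  rw [funext_iff, ← (finCongr (List.length_ofFn (f := u))).forall_congr_right]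
  exact forall_congr' fun i => by rw [List.get_ofFn]; rfl

theorem mem_cylinder_wordPrefix :
    y ∈ cylinder (wordPrefix x n) ↔ wordPrefix y n = wordPrefix x n :=
  mem_cylinder_ofFn.trans List.ofFn_inj.symm

theorem measurable_restrict_fin (n : ℕ) : Measurable fun (x : SymbSpace b) (i : Fin n) => x i := by
  fun_prop

theorem measurableSet_cylinder_wordPrefix (x : SymbSpace b) (n : ℕ) :
    MeasurableSet (cylinder (wordPrefix x n)) := by
  have hpreimage : cylinder (wordPrefix x n) =
      (fun (y : SymbSpace b) (i : Fin n) => y i) ⁻¹' {fun i : Fin n => x i} :=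
    Set.ext fun _ => mem_cylinder_ofFn
  rw [hpreimage]
  exact measurable_restrict_fin n (measurableSet_singleton _)

theorem measurable_comp_wordPrefix {Ω β : Type*} [MeasurableSpace Ω] [MeasurableSpace β]
    {F : List (Fin b) → Ω → β} (hF : ∀ w, Measurable (F w)) (n : ℕ) :
    Measurable fun p : SymbSpace b × Ω => F (wordPrefix p.1 n) p.2 := by
  have hword : Measurable fun q : (Fin n → Fin b) × Ω => F (List.ofFn q.1) q.2 :=
    measurable_from_prod_countable_right fun u => hF (List.ofFn u)
  exact hword.comp (((measurable_restrict_fin n).comp measurable_fst).prodMk measurable_snd)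

/-- The finite set `{x|_1, …, x|_n}` of nonempty prefixes of `x` of length at most `n`: the words
whose weights enter the density `Q_n` at `x`. -/
def prefixes (x : SymbSpace b) (n : ℕ) : Finset (List (Fin b)) :=
  (Finset.range n).image fun i => wordPrefix x (i + 1)

theorem mem_prefixes {w : List (Fin b)} :
    w ∈ prefixes x n ↔ ∃ i < n, wordPrefix x (i + 1) = w := by
  simp [prefixes]

theorem wordPrefix_succ_injective (x : SymbSpace b) :
    Function.Injective fun i : ℕ => wordPrefix x (i + 1) := fun i j hij => by
  simpa only [length_wordPrefix, Nat.add_right_cancel_iff] using congrArg List.length hij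

theorem wordPrefix_succ_ne_nil (x : SymbSpace b) (i : ℕ) : wordPrefix x (i + 1) ≠ [] :=
  List.ne_nil_of_length_eq_add_one (length_wordPrefix x (i + 1))

theorem nil_notMem_prefixes (x : SymbSpace b) (n : ℕ) : [] ∉ prefixes x n := fun h =>
  have ⟨i, _, hi⟩ := mem_prefixes.1 h
  wordPrefix_succ_ne_nil x i hi

theorem prod_prefixes {M : Type*} [CommMonoid M] (f : List (Fin b) → M) (x : SymbSpace b) (n : ℕ) :
    ∏ w ∈ prefixes x n, f w = ∏ i ∈ Finset.range n, f (wordPrefix x (i + 1)) :=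
  Finset.prod_image (wordPrefix_succ_injective x).injOn

theorem exists_prefixes_inter_eq (x y : SymbSpace b) (n : ℕ) :
    ∃ k ≤ n, wordPrefix y k = wordPrefix x k ∧ prefixes x n ∩ prefixes y n = prefixes x k := by
  set k := Nat.findGreatest (fun i => wordPrefix y i = wordPrefix x i) n
  have hkn : k ≤ n := Nat.findGreatest_le n
  have hk : wordPrefix y k = wordPrefix x k :=
    Nat.findGreatest_spec (P := fun i => wordPrefix y i = wordPrefix x i) n.zero_le rfl
  refine ⟨k, hkn, hk, Finset.ext fun w => ?_⟩
  simp only [Finset.mem_inter, mem_prefixes]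
  constructor
  · rintro ⟨⟨i, hi, rfl⟩, j, -, hji⟩
    obtain rfl : j = i := by
      simpa only [length_wordPrefix, Nat.add_right_cancel_iff] using congrArg List.length hji
    exact ⟨j, Nat.le_findGreatest hi hji, rfl⟩
  · rintro ⟨i, hi, rfl⟩
    refine ⟨⟨i, by lia, rfl⟩, i, by lia, ?_⟩
    rw [← take_wordPrefix y hi, hk, take_wordPrefix x hi]

end Words

section Cascade

variable {b : ℕ} {Ω : Type*} {X : List (Fin b) → Ω → ℝ}

theorem cascadeY_wordPrefix (X : List (Fin b) → Ω → ℝ) (x : SymbSpace b) (n : ℕ) (ω : Ω) :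
    cascadeY X (wordPrefix x n) ω = ∏ i ∈ Finset.range n, X (wordPrefix x (i + 1)) ω := by
  rw [cascadeY, length_wordPrefix]
  refine Finset.prod_congr rfl fun i hi => ?_
  rw [take_wordPrefix x (Finset.mem_range.1 hi)]

theorem cascadeY_nonneg (hX : ∀ w ω, 0 ≤ X w ω) (w : List (Fin b)) (ω : Ω) : 0 ≤ cascadeY X w ω :=
  Finset.prod_nonneg fun _ _ => hX _ ω

/-- The density `Q_n(ω, x) = X_{x|_1}(ω) ⋯ X_{x|_n}(ω)`, as an extended nonnegative real function
on `Σ × Ω`, so that Tonelli's theorem applies to it without integrability conditions. -/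
def cascadeQ (X : List (Fin b) → Ω → ℝ) (n : ℕ) (p : SymbSpace b × Ω) : ℝ≥0∞ :=
  ENNReal.ofReal (cascadeY X (wordPrefix p.1 n) p.2)

/-- The pairs `(x, ω)` for which the cascade stays below the barrier `c` along the first `n`
letters of `x`: the part of `Σ × Ω` on which second moments are computed. -/
def tameSet (X : List (Fin b) → Ω → ℝ) (c : ℕ → ℝ) (n : ℕ) : Set (SymbSpace b × Ω) :=
  {p | ∀ k ≤ n, cascadeY X (wordPrefix p.1 k) p.2 ≤ c k}

theorem cascadeQ_eq_prod_prefixes (hX : ∀ w ω, 0 ≤ X w ω) (n : ℕ) (x : SymbSpace b) (ω : Ω) :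
    cascadeQ X n (x, ω) = ∏ w ∈ prefixes x n, ENNReal.ofReal (X w ω) := by
  rw [cascadeQ, cascadeY_wordPrefix, prod_prefixes, ENNReal.ofReal_prod_of_nonneg fun _ _ => hX _ ω]

theorem cascadeZ_nonneg (hX : ∀ w ω, 0 ≤ X w ω) (ν : Measure (SymbSpace b)) (n : ℕ) (ω : Ω) :
    0 ≤ cascadeZ X ν n ω :=
  Finset.sum_nonneg fun _ _ => mul_nonneg (cascadeY_nonneg hX _ ω) ENNReal.toReal_nonneg

theorem ofReal_cascadeZ_eq_lintegral_cascadeQ (hX : ∀ w ω, 0 ≤ X w ω)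
    (ν : Measure (SymbSpace b)) [IsFiniteMeasure ν] (n : ℕ) (ω : Ω) :
    ENNReal.ofReal (cascadeZ X ν n ω) = ∫⁻ x, cascadeQ X n (x, ω) ∂ν := by
  have hcyl (u : Fin n → Fin b) :
      ν.map (fun (x : SymbSpace b) (i : Fin n) => x i) {u} = ν (cylinder (List.ofFn u)) := by
    rw [Measure.map_apply (measurable_restrict_fin n) (measurableSet_singleton u)]
    exact congrArg ν (Set.ext fun _ => mem_cylinder_ofFn.symm)
  calc ENNReal.ofReal (cascadeZ X ν n ω)
      = ∑ u : Fin n → Fin b, ENNReal.ofReal (cascadeY X (List.ofFn u) ω) *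
          ν (cylinder (List.ofFn u)) := by
        rw [cascadeZ, ENNReal.ofReal_sum_of_nonneg fun u _ =>
          mul_nonneg (cascadeY_nonneg hX _ ω) ENNReal.toReal_nonneg]
        refine Finset.sum_congr rfl fun u _ => ?_
        rw [ENNReal.ofReal_mul (cascadeY_nonneg hX _ ω), ENNReal.ofReal_toReal (measure_ne_top ν _)]
    _ = ∫⁻ u, ENNReal.ofReal (cascadeY X (List.ofFn u) ω)
          ∂ν.map (fun (x : SymbSpace b) (i : Fin n) => x i) := by
        simp_rw [lintegral_fintype, hcyl]
    _ = ∫⁻ x, cascadeQ X n (x, ω) ∂ν :=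
        lintegral_map Measurable.of_discrete (measurable_restrict_fin n)

variable [MeasurableSpace Ω]

theorem measurable_cascadeY (hX : ∀ w, Measurable (X w)) (w : List (Fin b)) :
    Measurable (cascadeY X w) :=
  Finset.measurable_prod _ fun _ _ => hX _

theorem measurable_cascadeQ (hX : ∀ w, Measurable (X w)) (n : ℕ) : Measurable (cascadeQ X n) :=
  (measurable_comp_wordPrefix (measurable_cascadeY hX) n).ennreal_ofReal

theorem measurableSet_tameSet (hX : ∀ w, Measurable (X w)) (c : ℕ → ℝ) (n : ℕ) :
    MeasurableSet (tameSet X c n) := by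
  simp only [tameSet, ofPred_forall]
  exact .iInter fun k => .iInter fun _ =>
    measurableSet_le (measurable_comp_wordPrefix (measurable_cascadeY hX) k) measurable_const

theorem measurable_cascadeZ (hX : ∀ w, Measurable (X w)) (ν : Measure (SymbSpace b)) (n : ℕ) :
    Measurable (cascadeZ X ν n) :=
  Finset.measurable_sum _ fun _ _ => (measurable_cascadeY hX _).mul_const _

theorem ofReal_cascadeZ_eq_tameSet_add_compl (hX : ∀ w ω, 0 ≤ X w ω) (hXm : ∀ w, Measurable (X w))
    (ν : Measure (SymbSpace b)) [IsFiniteMeasure ν] {E : Set (SymbSpace b)} (hE : MeasurableSet E)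
    (c : ℕ → ℝ) (n : ℕ) (ω : Ω) :
    ENNReal.ofReal (cascadeZ X ν n ω) =
      ∫⁻ x in E, (tameSet X c n).indicator (cascadeQ X n) (x, ω) ∂ν +
        (∫⁻ x in E, (tameSet X c n)ᶜ.indicator (cascadeQ X n) (x, ω) ∂ν +
          ∫⁻ x in Eᶜ, cascadeQ X n (x, ω) ∂ν) := by
  have htame : Measurable fun x => (tameSet X c n).indicator (cascadeQ X n) (x, ω) :=
    ((measurable_cascadeQ hXm n).indicator (measurableSet_tameSet hXm c n)).comp
      measurable_prodMk_right
  rw [ofReal_cascadeZ_eq_lintegral_cascadeQ hX, ← lintegral_add_compl _ hE, ← add_assoc,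
    ← lintegral_add_left htame]
  simp_rw [← Pi.add_apply ((tameSet X c n).indicator _), indicator_self_add_compl]

end Cascade

section Moments

variable {b : ℕ} {Ω : Type*} [MeasurableSpace Ω] {P : Measure Ω} {X : List (Fin b) → Ω → ℝ}
  {X₀ : Ω → ℝ}

/-- The size-biased law of `X₀`, i.e. the law with density `x` with respect to the law of `X₀`:
under the measure with density `Q_n(·, x)` with respect to `P`, the first `n` weights along the
path `x` are independent with this law. -/
def sizeBiasedLaw (P : Measure Ω) (X₀ : Ω → ℝ) : Measure ℝ :=
  (P.map X₀).withDensity ENNReal.ofReal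

theorem lintegral_ofReal_weight (hM1 : CascadeM1 P X X₀) :
    ∫⁻ ω, ENNReal.ofReal (X₀ ω) ∂P = 1 := by
  have hint : Integrable X₀ P := by
    by_contra h
    exact zero_ne_one ((integral_undef h).symm.trans hM1.mean₀)
  rw [← ofReal_integral_eq_lintegral_ofReal hint (ae_of_all _ hM1.nonneg₀), hM1.mean₀,
    ENNReal.ofReal_one]

theorem isProbabilityMeasure_sizeBiasedLaw (hM1 : CascadeM1 P X X₀) :
    IsProbabilityMeasure (sizeBiasedLaw P X₀) := by
  constructor
  rw [sizeBiasedLaw, withDensity_apply _ .univ, Measure.restrict_univ,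
    lintegral_map ENNReal.measurable_ofReal hM1.meas₀,
    lintegral_ofReal_weight hM1]

theorem lintegral_prod_weights (hM1 : CascadeM1 P X X₀) (S : Finset (List (Fin b)))
    (hS : [] ∉ S) : ∫⁻ ω, ∏ w ∈ S, ENNReal.ofReal (X w ω) ∂P = 1 := by
  have hne (w : S) : w.1 ≠ [] := fun h => hS (h ▸ w.2)
  have hinj : Function.Injective fun w : S => (⟨w.1, hne w⟩ : {w : List (Fin b) // w ≠ []}) :=
    fun v w hvw => Subtype.ext (Subtype.mk.inj hvw)
  have hindep : iIndepFun (fun (w : S) ω => ENNReal.ofReal (X w ω)) P :=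
    (hM1.indep.precomp hinj).comp (fun _ => ENNReal.ofReal) fun _ => ENNReal.measurable_ofReal
  simp_rw [← Finset.prod_coe_sort S]
  rw [lintegral_prod_eq_prod_lintegral_of_indepFun _ _ hindep fun w => (hM1.meas w).ennreal_ofReal]
  refine Finset.prod_eq_one fun w _ => ?_
  rw [← lintegral_ofReal_weight hM1]
  exact ((hM1.ident w (hne w)).comp ENNReal.measurable_ofReal).lintegral_eq

theorem lintegral_cascadeQ (hM1 : CascadeM1 P X X₀) (n : ℕ) (x : SymbSpace b) :
    ∫⁻ ω, cascadeQ X n (x, ω) ∂P = 1 := by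
  simp_rw [cascadeQ_eq_prod_prefixes hM1.nonneg]
  exact lintegral_prod_weights hM1 _ (nil_notMem_prefixes x n)

theorem map_weights_along_path [IsProbabilityMeasure P] (hM1 : CascadeM1 P X X₀)
    (x : SymbSpace b) :
    P.map (fun ω (i : ℕ) => X (wordPrefix x (i + 1)) ω) =
      Measure.infinitePi fun _ => P.map X₀ := by
  have hindep : iIndepFun (fun (i : ℕ) ω => X (wordPrefix x (i + 1)) ω) P :=
    hM1.indep.precomp (g := fun i => ⟨wordPrefix x (i + 1), wordPrefix_succ_ne_nil x i⟩)
      fun i j hij => wordPrefix_succ_injective x (congrArg Subtype.val hij)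
  rw [hindep.map_fun_eq_infinitePi_map fun i => hM1.meas _]
  exact congrArg _ (funext fun i => (hM1.ident _ (wordPrefix_succ_ne_nil x i)).map_eq)

theorem lintegral_cascadeQ_mul [IsProbabilityMeasure P] (hM1 : CascadeM1 P X X₀) {n : ℕ}
    {g : (ℕ → ℝ) → ℝ≥0∞} (hg : Measurable g) (hgn : DependsOn g (Finset.range n))
    (x : SymbSpace b) :
    ∫⁻ ω, cascadeQ X n (x, ω) * g (fun i => X (wordPrefix x (i + 1)) ω) ∂P =
      ∫⁻ z, g z ∂Measure.infinitePi fun _ => sizeBiasedLaw P X₀ := by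
  have hX₀ : IsProbabilityMeasure (P.map X₀) :=
    Measure.isProbabilityMeasure_map hM1.meas₀.aemeasurable
  have hsb : IsProbabilityMeasure ((P.map X₀).withDensity ENNReal.ofReal) :=
    isProbabilityMeasure_sizeBiasedLaw hM1
  calc ∫⁻ ω, cascadeQ X n (x, ω) * g (fun i => X (wordPrefix x (i + 1)) ω) ∂P
      = ∫⁻ z, (∏ i ∈ Finset.range n, ENNReal.ofReal (z i)) * g z
          ∂P.map fun ω (i : ℕ) => X (wordPrefix x (i + 1)) ω := by
        rw [lintegral_map (by fun_prop) (measurable_pi_lambda _ fun i => hM1.meas _)]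
        simp_rw [cascadeQ_eq_prod_prefixes hM1.nonneg, prod_prefixes]
    _ = ∫⁻ z, g z ∂Measure.infinitePi fun _ => sizeBiasedLaw P X₀ := by
        rw [map_weights_along_path hM1]
        exact lintegral_prod_mul_infinitePi _ (fun _ => ENNReal.measurable_ofReal) hg hgn

theorem lintegral_compl_tameSet_le [IsProbabilityMeasure P] (hM1 : CascadeM1 P X X₀) (c : ℕ → ℝ)
    (n : ℕ) (x : SymbSpace b) :
    ∫⁻ ω, (tameSet X c n)ᶜ.indicator (cascadeQ X n) (x, ω) ∂P ≤
      Measure.infinitePi (fun _ => sizeBiasedLaw P X₀)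
        {z | ∀ k, ∏ i ∈ Finset.range k, z i ≤ c k}ᶜ := by
  set B : Set (ℕ → ℝ) := {z | ∀ k ≤ n, ∏ i ∈ Finset.range k, z i ≤ c k}
  have hB : MeasurableSet B := by
    simp only [B, ofPred_forall]
    exact .iInter fun k => .iInter fun _ => measurableSet_le (by fun_prop) measurable_const
  have hBn : DependsOn (Bᶜ.indicator (1 : (ℕ → ℝ) → ℝ≥0∞)) (Finset.range n) := fun y z hyz => by
    have hprod (k : ℕ) (hk : k ≤ n) :
        ∏ i ∈ Finset.range k, y i = ∏ i ∈ Finset.range k, z i :=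
      Finset.prod_congr rfl fun i hi => hyz i (Finset.range_mono hk hi)
    have hmem : y ∈ B ↔ z ∈ B := forall₂_congr fun k hk => by rw [hprod k hk]
    simp only [indicator_apply, mem_compl_iff, hmem, Pi.one_apply]
  have hmem (ω : Ω) : (x, ω) ∈ tameSet X c n ↔ (fun i => X (wordPrefix x (i + 1)) ω) ∈ B :=
    forall₂_congr fun k _ => by rw [cascadeY_wordPrefix]
  calc ∫⁻ ω, (tameSet X c n)ᶜ.indicator (cascadeQ X n) (x, ω) ∂P
      = ∫⁻ ω, cascadeQ X n (x, ω) * Bᶜ.indicator 1 (fun i => X (wordPrefix x (i + 1)) ω) ∂P := by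
        refine lintegral_congr fun ω => ?_
        by_cases hω : (x, ω) ∈ tameSet X c n
        · rw [indicator_of_notMem (not_not_intro hω),
            indicator_of_notMem (not_not_intro ((hmem ω).1 hω)), mul_zero]
        · rw [indicator_of_mem hω, indicator_of_mem (mt (hmem ω).2 hω), Pi.one_apply, mul_one]
    _ = Measure.infinitePi (fun _ => sizeBiasedLaw P X₀) Bᶜ := by
        rw [lintegral_cascadeQ_mul hM1 (measurable_one.indicator hB.compl) hBn,
          lintegral_indicator_one hB.compl]
    _ ≤ Measure.infinitePi (fun _ => sizeBiasedLaw P X₀)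
          {z | ∀ k, ∏ i ∈ Finset.range k, z i ≤ c k}ᶜ :=
        measure_mono (compl_subset_compl.2 fun z hz k _ => hz k)

theorem lintegral_tameSet_mul_tameSet_le (hM1 : CascadeM1 P X X₀) (c : ℕ → ℝ) (n : ℕ)
    (x y : SymbSpace b) :
    ∫⁻ ω, (tameSet X c n).indicator (cascadeQ X n) (x, ω) *
        (tameSet X c n).indicator (cascadeQ X n) (y, ω) ∂P ≤
      ∑' k, (cylinder (wordPrefix x k)).indicator (fun _ => ENNReal.ofReal (c k)) y := by
  obtain ⟨k, hkn, hk, hinter⟩ := exists_prefixes_inter_eq x y n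
  have hmeas : Measurable fun ω => ∏ w ∈ prefixes x n ∪ prefixes y n, ENNReal.ofReal (X w ω) :=
    Finset.measurable_prod _ fun w _ => (hM1.meas w).ennreal_ofReal
  have hpointwise (ω : Ω) : (tameSet X c n).indicator (cascadeQ X n) (x, ω) *
      (tameSet X c n).indicator (cascadeQ X n) (y, ω) ≤
        ENNReal.ofReal (c k) * ∏ w ∈ prefixes x n ∪ prefixes y n, ENNReal.ofReal (X w ω) := by
    by_cases hx : (x, ω) ∈ tameSet X c n
    · calc _ ≤ cascadeQ X n (x, ω) * cascadeQ X n (y, ω) := by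
            gcongr <;> exact indicator_le_self _ _ _
        _ = cascadeQ X k (x, ω) *
            ∏ w ∈ prefixes x n ∪ prefixes y n, ENNReal.ofReal (X w ω) := by
          simp_rw [cascadeQ_eq_prod_prefixes hM1.nonneg]
          rw [← hinter, mul_comm (∏ w ∈ _ ∩ _, _), Finset.prod_union_inter]
        _ ≤ _ := by
          gcongr
          exact ENNReal.ofReal_le_ofReal (hx k hkn)
    · rw [indicator_of_notMem hx, zero_mul]
      exact zero_le
  calc _ ≤ ∫⁻ ω, ENNReal.ofReal (c k) *
          ∏ w ∈ prefixes x n ∪ prefixes y n, ENNReal.ofReal (X w ω) ∂P := lintegral_mono hpointwise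
    _ = ENNReal.ofReal (c k) := by
      rw [lintegral_const_mul _ hmeas, lintegral_prod_weights hM1, mul_one]
      simp only [Finset.mem_union, nil_notMem_prefixes, or_self, not_false_eq_true]
    _ = (cylinder (wordPrefix x k)).indicator (fun _ => ENNReal.ofReal (c k)) y := by
      rw [indicator_of_mem (mem_cylinder_wordPrefix.2 hk)]
    _ ≤ _ := ENNReal.le_tsum k

end Moments

section Decomposition

variable {b : ℕ} {Ω : Type*} [MeasurableSpace Ω] {P : Measure Ω} [IsProbabilityMeasure P]
  {X : List (Fin b) → Ω → ℝ} {X₀ : Ω → ℝ} {ν : Measure (SymbSpace b)} [IsFiniteMeasure ν]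
  {E : Set (SymbSpace b)}

theorem lintegral_sq_tameSet_le (hM1 : CascadeM1 P X X₀) (hE : MeasurableSet E) (c : ℕ → ℝ)
    {d : ℕ → ℝ≥0∞} (hd : ∀ x ∈ E, ∀ k, ν (cylinder (wordPrefix x k)) ≤ d k) (n : ℕ) :
    ∫⁻ ω, (∫⁻ x in E, (tameSet X c n).indicator (cascadeQ X n) (x, ω) ∂ν) ^ 2 ∂P ≤
      (∑' k, ENNReal.ofReal (c k) * d k) * ν E := by
  have hinner (x : SymbSpace b) (hx : x ∈ E) :
      ∫⁻ y in E, ∑' k, (cylinder (wordPrefix x k)).indicator (fun _ => ENNReal.ofReal (c k)) y ∂ν ≤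
        ∑' k, ENNReal.ofReal (c k) * d k := by
    rw [lintegral_tsum fun k =>
      (measurable_const.indicator (measurableSet_cylinder_wordPrefix x k)).aemeasurable]
    refine ENNReal.tsum_le_tsum fun k => ?_
    rw [lintegral_indicator_const (measurableSet_cylinder_wordPrefix x k)]
    gcongr
    exact (Measure.restrict_apply_le _ _).trans (hd x hx k)
  rw [lintegral_sq_lintegral
    ((measurable_cascadeQ hM1.meas n).indicator (measurableSet_tameSet hM1.meas c n))]
  calc _ ≤ ∫⁻ _ in E, ∑' k, ENNReal.ofReal (c k) * d k ∂ν :=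
        setLIntegral_mono' hE fun x hx => (lintegral_mono fun y =>
          lintegral_tameSet_mul_tameSet_le hM1 c n x y).trans (hinner x hx)
    _ = (∑' k, ENNReal.ofReal (c k) * d k) * ν E := setLIntegral_const _ _

theorem lintegral_compl_tameSet_add_compl_le (hM1 : CascadeM1 P X X₀) (E : Set (SymbSpace b))
    (c : ℕ → ℝ) (n : ℕ) :
    ∫⁻ ω, (∫⁻ x in E, (tameSet X c n)ᶜ.indicator (cascadeQ X n) (x, ω) ∂ν +
        ∫⁻ x in Eᶜ, cascadeQ X n (x, ω) ∂ν) ∂P ≤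
      Measure.infinitePi (fun _ => sizeBiasedLaw P X₀)
        {z | ∀ k, ∏ i ∈ Finset.range k, z i ≤ c k}ᶜ * ν E + ν Eᶜ := by
  have hQ := measurable_cascadeQ hM1.meas n
  have hcompl := hQ.indicator (measurableSet_tameSet hM1.meas c n).compl
  rw [lintegral_add_left hcompl.lintegral_prod_left']
  gcongr
  · rw [lintegral_lintegral_swap (by fun_prop)]
    exact (lintegral_mono fun x => lintegral_compl_tameSet_le hM1 c n x).trans_eq
      (setLIntegral_const _ _)
  · rw [lintegral_lintegral_swap (by fun_prop)]
    simp_rw [lintegral_cascadeQ hM1, setLIntegral_one, le_refl]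

theorem uniformIntegrable_cascadeZ (hM1 : CascadeM1 P X X₀)
    (h : ∀ ε : ℝ≥0∞, ε ≠ 0 → ∃ (E : Set (SymbSpace b)) (c : ℕ → ℝ) (d : ℕ → ℝ≥0∞),
      MeasurableSet E ∧ (∀ x ∈ E, ∀ k, ν (cylinder (wordPrefix x k)) ≤ d k) ∧
      ∑' k, ENNReal.ofReal (c k) * d k ≠ ∞ ∧
      Measure.infinitePi (fun _ => sizeBiasedLaw P X₀)
        {z | ∀ k, ∏ i ∈ Finset.range k, z i ≤ c k}ᶜ * ν E + ν Eᶜ ≤ ε) :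
    UniformIntegrable (fun n ω => cascadeZ X ν n ω) 1 P := by
  refine uniformIntegrable_one_of_enorm_le_add
    (fun n => (measurable_cascadeZ hM1.meas ν n).aestronglyMeasurable) fun ε hε => ?_
  obtain ⟨E, c, d, hE, hd, hsum, hsmall⟩ := h ε hε
  have hQ := measurable_cascadeQ hM1.meas
  have hcompl (n : ℕ) := (hQ n).indicator (measurableSet_tameSet hM1.meas c n).compl
  refine ⟨(∑' k, ENNReal.ofReal (c k) * d k) * ν E, ENNReal.mul_ne_top hsum (measure_ne_top ν E),
    fun n => ⟨_, _, (hcompl n).lintegral_prod_left'.add (hQ n).lintegral_prod_left', fun ω => ?_,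
      lintegral_sq_tameSet_le hM1 hE c hd n,
      (lintegral_compl_tameSet_add_compl_le hM1 E c n).trans hsmall⟩⟩
  rw [Real.enorm_eq_ofReal (cascadeZ_nonneg hM1.nonneg ν n ω)]
  exact (ofReal_cascadeZ_eq_tameSet_add_compl hM1.nonneg hM1.meas ν hE c n ω).le

end Decomposition

section Entropy

variable {Ω : Type*} [MeasurableSpace Ω] {P : Measure Ω} {X₀ : Ω → ℝ}

theorem lintegral_ofReal_neg_mul_log_ne_top [IsFiniteMeasure P] (hX₀ : ∀ ω, 0 ≤ X₀ ω) :
    ∫⁻ ω, ENNReal.ofReal (-(X₀ ω * Real.log (X₀ ω))) ∂P ≠ ∞ := by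
  have hle_one (ω : Ω) : ENNReal.ofReal (-(X₀ ω * Real.log (X₀ ω))) ≤ 1 := by
    rw [ENNReal.ofReal_le_one]
    linarith [Real.self_sub_one_le_mul_log (hX₀ ω), hX₀ ω]
  refine ne_top_of_le_ne_top (measure_ne_top P univ) ?_
  exact (lintegral_mono hle_one).trans_eq lintegral_one

theorem integrable_mul_log_of_entropyX_ne_top [IsFiniteMeasure P] (hX₀m : Measurable X₀)
    (hX₀ : ∀ ω, 0 ≤ X₀ ω) (h : entropyX P X₀ ≠ ∞) :
    Integrable (fun ω => X₀ ω * Real.log (X₀ ω)) P := by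
  have hneg := lintegral_ofReal_neg_mul_log_ne_top (P := P) hX₀
  refine integrable_of_lintegral_ofReal_ne_top (by fun_prop) (fun hpos => h ?_) hneg
  rw [entropyX, hpos, ENNReal.top_sub hneg]

theorem integral_mul_log_le_entropyX [IsFiniteMeasure P] (hX₀ : ∀ ω, 0 ≤ X₀ ω)
    (hint : Integrable (fun ω => X₀ ω * Real.log (X₀ ω)) P) :
    ∫ ω, X₀ ω * Real.log (X₀ ω) ∂P ≤ (entropyX P X₀).toReal := by
  rw [integral_eq_lintegral_pos_part_sub_lintegral_neg_part hint]
  exact ENNReal.le_toReal_sub (lintegral_ofReal_neg_mul_log_ne_top hX₀)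

theorem integrable_log_sizeBiasedLaw_iff (hX₀m : Measurable X₀) (hX₀ : ∀ ω, 0 ≤ X₀ ω) :
    Integrable Real.log (sizeBiasedLaw P X₀) ↔
      Integrable (fun ω => X₀ ω * Real.log (X₀ ω)) P := by
  rw [sizeBiasedLaw, integrable_withDensity_iff_integrable_smul' ENNReal.measurable_ofReal
    (ae_of_all _ fun _ => ENNReal.ofReal_lt_top),
    integrable_map_measure (by fun_prop) hX₀m.aemeasurable]
  simp only [Function.comp_def, smul_eq_mul, ENNReal.toReal_ofReal (hX₀ _)]

theorem integral_log_sizeBiasedLaw (hX₀m : Measurable X₀) (hX₀ : ∀ ω, 0 ≤ X₀ ω) :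
    ∫ x, Real.log x ∂sizeBiasedLaw P X₀ = ∫ ω, X₀ ω * Real.log (X₀ ω) ∂P := by
  rw [sizeBiasedLaw, integral_withDensity_eq_integral_toReal_smul ENNReal.measurable_ofReal
    (ae_of_all _ fun _ => ENNReal.ofReal_lt_top),
    integral_map hX₀m.aemeasurable (by fun_prop)]
  simp only [smul_eq_mul, ENNReal.toReal_ofReal (hX₀ _)]

end Entropy

section LocalDimension

variable {b : ℕ} {ν : Measure (SymbSpace b)} {x : SymbSpace b}

theorem eventually_measure_cylinder_le {r : ℝ≥0} (h : r < lowerLocalDim ν x) :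
    ∀ᶠ k : ℕ in atTop, (ν (cylinder (wordPrefix x k))).toReal ≤ Real.exp (k * -r) := by
  filter_upwards [eventually_lt_of_lt_liminf h, eventually_gt_atTop 0] with k hk hk₀
  rw [← ENNReal.ofReal_coe_nnreal] at hk
  have hlog := (ENNReal.ofReal_lt_ofReal_iff'.1 hk).1
  rw [lt_div_iff₀ (by exact_mod_cast hk₀)] at hlog
  rcases ENNReal.toReal_nonneg.eq_or_lt with hzero | hpos
  · exact hzero.symm.trans_le (Real.exp_pos _).le
  · rw [← Real.log_le_iff_le_exp hpos]
    linarith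

/-- The points all of whose cylinders satisfy `ν([x|_k]) ≤ C e^{-ks}`, i.e. those satisfying a
Frostman condition of exponent `s` and constant `C` in the metric `d` of `Σ`. -/
def frostmanSet (ν : Measure (SymbSpace b)) (s C : ℝ) : Set (SymbSpace b) :=
  {x | ∀ k : ℕ, ν (cylinder (wordPrefix x k)) ≤ ENNReal.ofReal (C * Real.exp (k * -s))}

theorem measurableSet_frostmanSet (ν : Measure (SymbSpace b)) (s C : ℝ) :
    MeasurableSet (frostmanSet ν s C) := by
  have hmass (k : ℕ) : Measurable fun x : SymbSpace b => ν (cylinder (wordPrefix x k)) :=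
    (Measurable.of_discrete (f := fun u : Fin k → Fin b => ν (cylinder (List.ofFn u)))).comp
      (measurable_restrict_fin k)
  simp only [frostmanSet, ofPred_forall]
  exact .iInter fun k => measurableSet_le (hmass k) measurable_const

theorem frostmanSet_subset_frostmanSet {s s' C C' : ℝ} (hs : s' ≤ s) (hC : C ≤ C') (hC' : 0 ≤ C') :
    frostmanSet ν s C ⊆ frostmanSet ν s' C' := fun _ hx k =>
  (hx k).trans (ENNReal.ofReal_le_ofReal (by gcongr))

theorem exists_mem_frostmanSet [IsFiniteMeasure ν] {r : ℝ≥0} (h : r < lowerLocalDim ν x) :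
    ∃ C : ℕ, x ∈ frostmanSet ν r C := by
  obtain ⟨C, hC⟩ := exists_forall_le_mul_exp (eventually_measure_cylinder_le h)
  exact ⟨C, fun k =>
    (ENNReal.le_ofReal_iff_toReal_le (measure_ne_top _ _) (by positivity)).2 (hC k)⟩

theorem exists_measure_compl_frostmanSet_le [IsFiniteMeasure ν] {d : ℝ≥0}
    (h : ∀ᵐ x ∂ν, d < lowerLocalDim ν x) {ε : ℝ≥0∞} (hε : ε ≠ 0) :
    ∃ s : ℝ, d < s ∧ ∃ C : ℕ, ν (frostmanSet ν s C)ᶜ ≤ ε := by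
  suffices ∃ j : ℕ, ν (frostmanSet ν (d + 1 / (j + 1)) j)ᶜ ≤ ε from
    have ⟨j, hj⟩ := this
    ⟨d + 1 / (j + 1), lt_add_of_pos_right _ (by positivity), j, hj⟩
  refine exists_measure_compl_le_of_ae_exists_mem
    (s := fun j : ℕ => frostmanSet ν (d + 1 / (j + 1)) j)
    (fun i j hij => frostmanSet_subset_frostmanSet (by gcongr) (by gcongr) j.cast_nonneg)
    (fun j => measurableSet_frostmanSet ν _ _) ?_ hε
  filter_upwards [h] with x hx
  obtain ⟨r, hdr, hr⟩ := ENNReal.lt_iff_exists_nnreal_btwn.1 hx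
  obtain ⟨C, hC⟩ := exists_mem_frostmanSet hr
  obtain ⟨N, hN⟩ := exists_nat_one_div_lt (sub_pos.2 (NNReal.coe_lt_coe.2 (by exact_mod_cast hdr)))
  refine ⟨max C N, frostmanSet_subset_frostmanSet ?_ (by simp) (Nat.cast_nonneg _) hC⟩
  have hN' : (1 : ℝ) / ((max C N : ℕ) + 1) ≤ 1 / (N + 1) := by gcongr; exact le_max_right C N
  linarith

end LocalDimension

/-- **Theorem (sufficient condition for `Q`-regularity).** Let `Q` be a Mandelbrot
multiplicative cascade (assumption (M1)) acting on a Borel probability measure `ν` on the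
symbolic space `Σ`. If for `ν`-almost every `x` the lower local dimension of `ν` at `x` is
strictly greater than `h_X`, then `ν` is `Q`-regular, i.e. the martingale `(Z_n)` is
uniformly integrable. In particular this holds if the lower Hausdorff dimension of `ν` is
strictly greater than `h_X`. -/
theorem regular_of_lowerLocalDim_gt_entropy
    {b : ℕ} (hb : 2 ≤ b)
    {Ω : Type*} [MeasurableSpace Ω] (P : Measure Ω) [IsProbabilityMeasure P]
    (X : List (Fin b) → Ω → ℝ) (X₀ : Ω → ℝ)
    (hM1 : CascadeM1 P X X₀)
    (ν : Measure (SymbSpace b)) [IsProbabilityMeasure ν] :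
    ((∀ᵐ x ∂ν, entropyX P X₀ < lowerLocalDim ν x) →
      UniformIntegrable (fun n ω => cascadeZ X ν n ω) 1 P) ∧
    (entropyX P X₀ < lowerHausdorffDim ν →
      UniformIntegrable (fun n ω => cascadeZ X ν n ω) 1 P) := by
  have regular_of_localDim (H : ∀ᵐ x ∂ν, entropyX P X₀ < lowerLocalDim ν x) :
      UniformIntegrable (fun n ω => cascadeZ X ν n ω) 1 P := by
    have hfin : entropyX P X₀ ≠ ∞ := have ⟨_, hx⟩ := H.exists; hx.ne_top
    have := isProbabilityMeasure_sizeBiasedLaw hM1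
    have hXlogX := integrable_mul_log_of_entropyX_ne_top hM1.meas₀ hM1.nonneg₀ hfin
    have hint := (integrable_log_sizeBiasedLaw_iff hM1.meas₀ hM1.nonneg₀).2 hXlogX
    have hmean : ∫ x, Real.log x ∂sizeBiasedLaw P X₀ ≤ (entropyX P X₀).toReal :=
      (integral_log_sizeBiasedLaw hM1.meas₀ hM1.nonneg₀).trans_le
        (integral_mul_log_le_entropyX hM1.nonneg₀ hXlogX)
    refine uniformIntegrable_cascadeZ hM1 fun ε hε => ?_
    have hε₂ : ε / 2 ≠ 0 := (ENNReal.half_pos hε).ne'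
    rw [← ENNReal.coe_toNNReal hfin] at H
    obtain ⟨s, hs, C, hC⟩ := exists_measure_compl_frostmanSet_le H hε₂
    obtain ⟨a, ha, has⟩ := exists_between hs
    obtain ⟨M, hM⟩ := exists_infinitePi_compl_prod_le_exp_le hint (hmean.trans_lt ha) hε₂
    refine ⟨frostmanSet ν s C, fun k => M * Real.exp (k * a), _,
      measurableSet_frostmanSet ν s C, fun x hx => hx,
      tsum_ofReal_exp_mul_ofReal_exp_ne_top M.cast_nonneg has, ?_⟩
    exact (add_le_add (mul_le_of_le_of_le_one hM prob_le_one) hC).trans_eq (ENNReal.add_halves ε)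
  exact ⟨regular_of_localDim, fun H => regular_of_localDim (ae_lt_of_lt_essInf H)⟩

end
end

section
/- Let (X,𝓑,T,μ) be an ergodic measure-preserving dynamical system and f : X → ℝ a measurable function (not assumed integrable). Suppose that for μ-almost every x ∈ X one has lim_{n→∞} n^{−1} S_n f(x) = 0, where S_n f(x) = Σ_{k=0}^{n−1} f(T^k x). Then for every b > 0, τ_b(x) = inf{n ≥ 1 : S_n f(x) ∈ [−b,b]} is finite for μ-almost every x ∈ X. -/
open MeasureTheory Filter Set

/-!
Let `A` be the set of points whose Birkhoff sums never return to `[-b, b]`. If an orbit visits `A`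
at the times `i < j`, then `Sⱼf(x) - Sᵢf(x)` is a Birkhoff sum started in `A`, so it is larger than
`b` in absolute value. The visits to `A` before time `n` thus give `b`-separated real numbers
`Sᵢf(x)`, and as `Sₙf(x) = o(n)` these lie in an interval of length `o(n)`. Hence almost every orbit
visits `A` with frequency zero, and since `T` preserves the finite measure `μ`, integrating the
frequencies shows that `μ A = 0`.
-/

open scoped Asymptotics Finset Topology

section Separated

theorem card_le_of_pairwise_le_abs_sub {ι K : Type*} [Field K] [LinearOrder K]
    [IsStrictOrderedRing K] [FloorSemiring K] {s : Finset ι} {u : ι → K} {a b δ : K} (hδ : 0 < δ)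
    (hab : a ≤ b) (hu : MapsTo u s (Icc a b))
    (hsep : (s : Set ι).Pairwise fun i j ↦ δ ≤ |u i - u j|) :
    (#s : K) ≤ (b - a) / δ + 1 := by
  have floor_mapsTo : MapsTo (fun i ↦ ⌊(u i - a) / δ⌋₊) s
      (Finset.range (⌊(b - a) / δ⌋₊ + 1)) := fun i hi ↦ by
    have := (hu hi).2
    simp only [Finset.coe_range, mem_Iio, Nat.lt_succ_iff]
    gcongr
  have floor_injOn : (s : Set ι).InjOn fun i ↦ ⌊(u i - a) / δ⌋₊ := by
    intro i hi j hj hij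
    by_contra hne
    have quotient_nonneg {k} (hk : k ∈ (s : Set ι)) : 0 ≤ (u k - a) / δ :=
      div_nonneg (sub_nonneg.2 (hu hk).1) hδ.le
    have abs_lt_one : |(u i - a) / δ - (u j - a) / δ| < 1 := by
      obtain ⟨hi₁, hi₂⟩ := (Nat.floor_eq_iff (quotient_nonneg hi)).1 hij
      have hj₁ := Nat.floor_le (quotient_nonneg hj)
      have hj₂ := Nat.lt_floor_add_one ((u j - a) / δ)
      rw [abs_sub_lt_iff]
      constructor <;> linarith
    rw [← sub_div, sub_sub_sub_cancel_right, abs_div, abs_of_pos hδ, div_lt_one hδ] at abs_lt_one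
    exact (hsep hi hj hne).not_gt abs_lt_one
  calc (#s : K) ≤ (⌊(b - a) / δ⌋₊ + 1 : ℕ) := by
        exact_mod_cast (Finset.card_le_card_of_injOn _ floor_mapsTo floor_injOn).trans_eq
          (Finset.card_range _)
    _ ≤ (b - a) / δ + 1 := by
        push_cast
        gcongr
        exact Nat.floor_le (div_nonneg (sub_nonneg.2 hab) hδ.le)

theorem exists_norm_le_add_mul_of_isLittleO {E : Type*} [SeminormedAddCommGroup E] {u : ℕ → E}
    (hu : u =o[atTop] ((↑) : ℕ → ℝ)) {ε : ℝ} (hε : 0 < ε) :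
    ∃ C, 0 ≤ C ∧ ∀ n : ℕ, ‖u n‖ ≤ C + ε * n := by
  obtain ⟨N, hN⟩ := eventually_atTop.1 (hu.def hε)
  refine ⟨∑ i ∈ Finset.range N, ‖u i‖, by positivity, fun n ↦ ?_⟩
  rcases lt_or_ge n N with hn | hn
  · have : ‖u n‖ ≤ ∑ i ∈ Finset.range N, ‖u i‖ :=
      Finset.single_le_sum (f := fun i ↦ ‖u i‖) (fun _ _ ↦ norm_nonneg _) (Finset.mem_range.2 hn)
    exact le_add_of_le_of_nonneg this (by positivity)
  · exact le_add_of_nonneg_of_le (by positivity) (by simpa using hN n hn)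

theorem isLittleO_count_of_pairwise_le_abs_sub {u : ℕ → ℝ} (hu : u =o[atTop] ((↑) : ℕ → ℝ))
    {p : ℕ → Prop} [DecidablePred p] {δ : ℝ} (hδ : 0 < δ)
    (hsep : {k | p k}.Pairwise fun i j ↦ δ ≤ |u i - u j|) :
    (fun n ↦ (Nat.count p n : ℝ)) =o[atTop] ((↑) : ℕ → ℝ) := by
  refine Asymptotics.isLittleO_iff.2 fun ε hε ↦ ?_
  obtain ⟨C, hC, hbound⟩ := exists_norm_le_add_mul_of_isLittleO hu (ε := ε * δ / 4) (by positivity)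
  have count_le (n : ℕ) : (Nat.count p n : ℝ) ≤ (2 * C / δ + 1) + ε / 2 * n := by
    set M := C + ε * δ / 4 * n with hM
    have hM₀ : 0 ≤ M := by positivity
    have mapsTo : MapsTo u ({k ∈ Finset.range n | p k} : Finset ℕ) (Icc (-M) M) := fun k hk ↦ by
      have hkn : k < n := by simpa using (Finset.mem_filter.1 hk).1
      exact abs_le.1 <| (hbound k).trans (by rw [hM]; gcongr)
    have card_le := card_le_of_pairwise_le_abs_sub hδ (neg_le_self hM₀) mapsTo
      (hsep.mono fun k hk ↦ (Finset.mem_filter.1 hk).2)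
    rw [Nat.count_eq_card_filter_range]
    refine card_le.trans_eq ?_
    rw [hM]
    field_simp
    ring
  filter_upwards [tendsto_natCast_atTop_atTop.eventually_ge_atTop ((2 * C / δ + 1) / (ε / 2))]
    with n hn
  rw [div_le_iff₀' (by positivity)] at hn
  rw [Real.norm_natCast, Real.norm_natCast]
  linarith [count_le n]

end Separated

section BirkhoffAverage

variable {X : Type*} {T : X → X}

theorem birkhoffSum_indicator_one {R : Type*} [NonAssocSemiring R] (T : X → X) (A : Set X)
    [DecidablePred (· ∈ A)] (n : ℕ) (x : X) :
    birkhoffSum T (A.indicator (1 : X → R)) n x = Nat.count (fun k ↦ T^[k] x ∈ A) n := by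
  simp [birkhoffSum, indicator_apply, Nat.count_eq_card_filter_range]

section Seminormed

variable {E : Type*} [SeminormedAddCommGroup E] [NormedSpace ℝ E]

theorem tendsto_birkhoffAverage_zero_iff_isLittleO {f : X → E} {x : X} :
    Tendsto (birkhoffAverage ℝ T f · x) atTop (𝓝 0) ↔
      (birkhoffSum T f · x) =o[atTop] ((↑) : ℕ → ℝ) := by
  rw [← Asymptotics.isLittleO_norm_left, Asymptotics.isLittleO_iff_tendsto
    (by simp +contextual [birkhoffSum_zero]), tendsto_zero_iff_norm_tendsto_zero]
  simp [birkhoffAverage, norm_smul, div_eq_inv_mul]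

theorem norm_birkhoffAverage_le {g : X → E} {C : ℝ} {x : X} (hg : ∀ k, ‖g (T^[k] x)‖ ≤ C) (n : ℕ) :
    ‖birkhoffAverage ℝ T g n x‖ ≤ C := by
  have hC : 0 ≤ C := (norm_nonneg _).trans (hg 0)
  have norm_sum_le : ‖birkhoffSum T g n x‖ ≤ n * C :=
    (norm_sum_le_of_le _ fun k _ ↦ hg k).trans_eq (by simp)
  rw [birkhoffAverage, norm_smul, norm_inv, Real.norm_natCast, ← div_eq_inv_mul]
  exact div_le_of_le_mul₀ n.cast_nonneg hC (by rwa [mul_comm])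

end Seminormed

variable [MeasurableSpace X] {μ : Measure X}

theorem aestronglyMeasurable_birkhoffSum {M : Type*} [TopologicalSpace M] [AddCommMonoid M]
    [ContinuousAdd M] {f : X → M} (hT : Measure.QuasiMeasurePreserving T μ μ)
    (hf : AEStronglyMeasurable f μ) (n : ℕ) : AEStronglyMeasurable (birkhoffSum T f n) μ :=
  Finset.aestronglyMeasurable_fun_sum _ fun k _ ↦ hf.comp_quasiMeasurePreserving (hT.iterate k)

section Integral

variable {E : Type*} [NormedAddCommGroup E] [NormedSpace ℝ E]

theorem integral_birkhoffAverage {g : X → E} (hT : MeasurePreserving T μ μ) (hg : Integrable g μ)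
    {n : ℕ} (hn : n ≠ 0) : ∫ x, birkhoffAverage ℝ T g n x ∂μ = ∫ x, g x ∂μ := by
  have integral_iterate (k : ℕ) : ∫ x, g (T^[k] x) ∂μ = ∫ x, g x ∂μ := by
    have hTk := hT.iterate k
    have hg_map : AEStronglyMeasurable g (μ.map T^[k]) := by
      simpa only [hTk.map_eq] using hg.aestronglyMeasurable
    rw [← integral_map hTk.aemeasurable hg_map, hTk.map_eq]
  have integrable_iterate (k : ℕ) : Integrable (fun x ↦ g (T^[k] x)) μ :=
    (hT.iterate k).integrable_comp_of_integrable hg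
  simp only [birkhoffAverage, birkhoffSum]
  rw [integral_smul, integral_finsetSum _ fun k _ ↦ integrable_iterate k]
  simp [integral_iterate, ← Nat.cast_smul_eq_nsmul ℝ, hn]

theorem integral_eq_of_ae_tendsto_birkhoffAverage [IsFiniteMeasure μ] {g h : X → E} {C : ℝ}
    (hT : MeasurePreserving T μ μ) (hg : AEStronglyMeasurable g μ) (hC : ∀ᵐ x ∂μ, ‖g x‖ ≤ C)
    (hlim : ∀ᵐ x ∂μ, Tendsto (birkhoffAverage ℝ T g · x) atTop (𝓝 (h x))) :
    ∫ x, g x ∂μ = ∫ x, h x ∂μ := by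
  have orbit_bound : ∀ᵐ x ∂μ, ∀ k, ‖g (T^[k] x)‖ ≤ C :=
    ae_all_iff.2 fun k ↦ (hT.iterate k).quasiMeasurePreserving.ae hC
  have tendsto_integral : Tendsto (fun n ↦ ∫ x, birkhoffAverage ℝ T g n x ∂μ) atTop
      (𝓝 (∫ x, h x ∂μ)) :=
    tendsto_integral_of_dominated_convergence (fun _ ↦ C)
      (fun n ↦ (aestronglyMeasurable_birkhoffSum hT.quasiMeasurePreserving hg n).const_smul _)
      (integrable_const C)
      (fun n ↦ orbit_bound.mono fun x hx ↦ norm_birkhoffAverage_le hx n) hlim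
  refine tendsto_nhds_unique (tendsto_const_nhds.congr' ?_) tendsto_integral
  filter_upwards [eventually_ne_atTop 0] with n hn
  exact (integral_birkhoffAverage hT (.of_bound hg C hC) hn).symm

end Integral

theorem measure_eq_zero_of_ae_isLittleO_count [IsFiniteMeasure μ] {A : Set X}
    [DecidablePred (· ∈ A)] (hT : MeasurePreserving T μ μ) (hA : NullMeasurableSet A μ)
    (hcount : ∀ᵐ x ∂μ,
      (fun n ↦ (Nat.count (fun k ↦ T^[k] x ∈ A) n : ℝ)) =o[atTop] ((↑) : ℕ → ℝ)) :
    μ A = 0 := by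
  have hlim : ∀ᵐ x ∂μ, Tendsto (birkhoffAverage ℝ T (A.indicator (1 : X → ℝ)) · x) atTop (𝓝 0) := by
    filter_upwards [hcount] with x hx
    simpa only [tendsto_birkhoffAverage_zero_iff_isLittleO, birkhoffSum_indicator_one] using hx
  have integral_eq_zero : ∫ x, A.indicator (1 : X → ℝ) x ∂μ = ∫ _, (0 : ℝ) ∂μ :=
    integral_eq_of_ae_tendsto_birkhoffAverage hT
      (aestronglyMeasurable_const.indicator₀ hA)
      (.of_forall fun x ↦ (norm_indicator_le_norm_self _ x).trans_eq norm_one) hlim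
  simpa [integral_indicator₀ hA, measureReal_eq_zero_iff] using integral_eq_zero

end BirkhoffAverage

section NonreturnSet

variable {X E : Type*} [SeminormedAddCommGroup E] {T : X → X} {f : X → E} {b : ℝ}

/-- The points at which the time `τ_b` of first return of the Birkhoff sums to the closed ball of
radius `b` is infinite; the theorem says that this set is null. -/
def nonreturnSet (T : X → X) (f : X → E) (b : ℝ) : Set X :=
  {x | ∀ n, 1 ≤ n → b < ‖birkhoffSum T f n x‖}

theorem nullMeasurableSet_nonreturnSet [MeasurableSpace X] {μ : Measure X}
    (hT : Measure.QuasiMeasurePreserving T μ μ) (hf : AEStronglyMeasurable f μ) (b : ℝ) :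
    NullMeasurableSet (nonreturnSet T f b) μ := by
  simp only [nonreturnSet, ofPred_forall]
  exact .iInter fun n ↦ .iInter fun _ ↦ nullMeasurableSet_lt aemeasurable_const
    (aestronglyMeasurable_birkhoffSum hT hf n).norm.aemeasurable

theorem lt_norm_birkhoffSum_sub_of_mem_nonreturnSet {x : X} {i j : ℕ} (hij : i < j)
    (hi : T^[i] x ∈ nonreturnSet T f b) :
    b < ‖birkhoffSum T f j x - birkhoffSum T f i x‖ := by
  obtain ⟨m, rfl⟩ := Nat.exists_eq_add_of_le hij.le
  rw [birkhoffSum_add, add_sub_cancel_left]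
  exact hi m (by lia)

theorem pairwise_le_norm_birkhoffSum_sub (T : X → X) (f : X → E) (b : ℝ) (x : X) :
    {k | T^[k] x ∈ nonreturnSet T f b}.Pairwise fun i j ↦
      b ≤ ‖birkhoffSum T f i x - birkhoffSum T f j x‖ := by
  intro i hi j hj hne
  rcases hne.lt_or_gt with hij | hji
  · rw [norm_sub_rev]
    exact (lt_norm_birkhoffSum_sub_of_mem_nonreturnSet hij hi).le
  · exact (lt_norm_birkhoffSum_sub_of_mem_nonreturnSet hji hj).le

theorem measure_nonreturnSet_eq_zero [MeasurableSpace X] {μ : Measure X} [IsFiniteMeasure μ]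
    {f : X → ℝ} (hT : MeasurePreserving T μ μ) (hf : AEStronglyMeasurable f μ)
    (h0 : ∀ᵐ x ∂μ, Tendsto (birkhoffAverage ℝ T f · x) atTop (𝓝 0)) (hb : 0 < b) :
    μ (nonreturnSet T f b) = 0 := by
  classical
  refine measure_eq_zero_of_ae_isLittleO_count hT
    (nullMeasurableSet_nonreturnSet hT.quasiMeasurePreserving hf b) ?_
  filter_upwards [h0] with x hx
  exact isLittleO_count_of_pairwise_le_abs_sub (tendsto_birkhoffAverage_zero_iff_isLittleO.1 hx) hb
    (pairwise_le_norm_birkhoffSum_sub T f b x)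

end NonreturnSet

theorem birkhoff_sum_recurrence_general {X : Type*} [MeasurableSpace X] {μ : Measure X}
    [IsFiniteMeasure μ] {T : X → X} (hT : MeasurePreserving T μ μ) {f : X → ℝ}
    (hf : AEMeasurable f μ)
    (h0 : ∀ᵐ x ∂μ, Tendsto (birkhoffAverage ℝ T f · x) atTop (𝓝 0)) {b : ℝ} (hb : 0 < b) :
    ∀ᵐ x ∂μ, ∃ n : ℕ, 1 ≤ n ∧ birkhoffSum T f n x ∈ Icc (-b) b := by
  have hnull := measure_nonreturnSet_eq_zero hT hf.aestronglyMeasurable h0 hb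
  filter_upwards [measure_eq_zero_iff_ae_notMem.1 hnull] with x hx
  simpa [nonreturnSet, abs_le] using hx

/-- **Dekking-type recurrence of Birkhoff sums with zero mean.**
Let `(X, 𝓑, T, μ)` be an ergodic measure-preserving dynamical system and `f : X → ℝ` a
measurable function (not assumed integrable). If for `μ`-almost every `x` the Birkhoff
averages `n⁻¹ Sₙf(x)` tend to `0`, then for every `b > 0`, the hitting time
`τ_b(x) = inf {n ≥ 1 : Sₙf(x) ∈ [-b, b]}` is finite for `μ`-almost every `x`. -/
theorem birkhoff_sum_recurrence
    {X : Type*} [MeasurableSpace X] (μ : Measure X) [IsProbabilityMeasure μ]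
    (T : X → X) (hT : Ergodic T μ)
    (f : X → ℝ) (hf : Measurable f)
    (h0 : ∀ᵐ x ∂μ, Tendsto
      (fun n : ℕ => (∑ k ∈ Finset.range n, f (T^[k] x)) / (n : ℝ)) atTop (nhds 0)) :
    ∀ b : ℝ, 0 < b →
      ∀ᵐ x ∂μ, ∃ n : ℕ, 1 ≤ n ∧ (∑ k ∈ Finset.range n, f (T^[k] x)) ∈ Set.Icc (-b) b := fun _ hb ↦
  birkhoff_sum_recurrence_general hT.toMeasurePreserving hf.aemeasurable
    (by simpa only [birkhoffAverage, birkhoffSum, smul_eq_mul, ← div_eq_inv_mul] using h0) hb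
end
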